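/- In the linear-utility variant of a social Schelling game (utility of agent i under assignment v equal to α·f_i(v) − β·e_i(v) for fixed α, β ≥ 0) in which all agents are strategic (no stubborn agents), every assignment that maximizes the social welfare over all assignments is an equilibrium; consequently the price of stability of such games is 1. -/

import Mathlib

/-- A (social) Schelling game: agents `A`, of which `strategic` are the strategic
ones (the rest being stubborn), a social network `net` on the agents (the friends
of an agent are her neighbors in `net`, all other agents are her enemies), a
topology `top` on the set of locations `V`, and the preferred locations `loc`
of the (stubborn) agents. -/
structure SchellingGame (A V : Type) where
  strategic : Finset A
  net : SimpleGraph A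
  top : SimpleGraph V
  loc : A → V

namespace SchellingGame

variable {A V : Type} [Fintype A] [DecidableEq A] [Fintype V] [DecidableEq V]

/-- There are `n ≥ 2` agents, strictly more locations than agents, and the
stubborn agents have pairwise distinct preferred locations. -/
def WellFormed (g : SchellingGame A V) : Prop :=
  2 ≤ Fintype.card A ∧ Fintype.card A < Fintype.card V ∧
    Set.InjOn g.loc ↑(g.strategicᶜ)

/-- An assignment is an injective placement of the agents on the nodes of the
topology which places every stubborn agent at her preferred location. -/
def IsAssignment (g : SchellingGame A V) (v : A → V) : Prop :=
  Function.Injective v ∧ ∀ i ∉ g.strategic, v i = g.loc i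

/-- The number of friends of `i` occupying nodes adjacent to `v i`. -/
noncomputable def fcount (g : SchellingGame A V) (v : A → V) (i : A) : ℕ :=
  Nat.card {j : A // g.net.Adj i j ∧ g.top.Adj (v i) (v j)}

/-- The number of enemies of `i` occupying nodes adjacent to `v i`. -/
noncomputable def ecount (g : SchellingGame A V) (v : A → V) (i : A) : ℕ :=
  Nat.card {j : A // j ≠ i ∧ ¬ g.net.Adj i j ∧ g.top.Adj (v i) (v j)}

/-- The utility of agent `i` under assignment `v`: `0` if `i` has no adjacent
friends, and otherwise the fraction of friends among her occupied neighbors. -/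
noncomputable def util (g : SchellingGame A V) (v : A → V) (i : A) : ℚ :=
  if g.fcount v i = 0 then 0
  else (g.fcount v i : ℚ) / ((g.fcount v i : ℚ) + (g.ecount v i : ℚ))

/-- An assignment is an equilibrium if no strategic agent can strictly increase
her utility by relocating to an unoccupied node. -/
def IsEquilibrium (g : SchellingGame A V) (v : A → V) : Prop :=
  g.IsAssignment v ∧ ∀ i ∈ g.strategic, ∀ z : V, (∀ j : A, v j ≠ z) →
    g.util (Function.update v i z) i ≤ g.util v i

/-- The social welfare: the total utility of the strategic agents. -/
noncomputable def SW (g : SchellingGame A V) (v : A → V) : ℚ :=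
  ∑ i ∈ g.strategic, g.util v i

/-- `g` is a `k`-typed Schelling game with type map `typ`: two distinct agents are
friends iff they have the same type, and every type is nonempty. -/
def IsTypedGame (g : SchellingGame A V) (k : ℕ) (typ : A → Fin k) : Prop :=
  (∀ i j : A, g.net.Adj i j ↔ (i ≠ j ∧ typ i = typ j)) ∧ ∀ c : Fin k, ∃ i : A, typ i = c

end SchellingGame

/-- A star graph: one center node adjacent to all other nodes, and no other edges. -/
def IsStar {V : Type} (G : SimpleGraph V) : Prop :=
  ∃ c : V, ∀ a b : V, G.Adj a b ↔ (a ≠ b ∧ (a = c ∨ b = c))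

namespace SchellingGame

variable {A V : Type} [Fintype A] [DecidableEq A] [Fintype V] [DecidableEq V]

/-- Linear-utility variant: the utility of agent `i` is `α·f_i(v) − β·e_i(v)`. -/
noncomputable def linUtil (g : SchellingGame A V) (a b : ℝ) (v : A → V) (i : A) : ℝ :=
  a * (g.fcount v i : ℝ) - b * (g.ecount v i : ℝ)

/-- The potential `Φ(v) = Σ_{i ∈ N} (α·f_i(v) − β·e_i(v))`. -/
noncomputable def linPotential (g : SchellingGame A V) (a b : ℝ) (v : A → V) : ℝ :=
  ∑ i : A, g.linUtil a b v i

/-- Equilibrium for the linear-utility variant: no strategic agent can strictly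
increase her (linear) utility by relocating to an unoccupied node. -/
def LinIsEquilibrium (g : SchellingGame A V) (a b : ℝ) (v : A → V) : Prop :=
  g.IsAssignment v ∧ ∀ i ∈ g.strategic, ∀ z : V, (∀ j : A, v j ≠ z) →
    g.linUtil a b (Function.update v i z) i ≤ g.linUtil a b v i

/-- Social welfare in the linear-utility variant. -/
noncomputable def linSW (g : SchellingGame A V) (a b : ℝ) (v : A → V) : ℝ :=
  ∑ i ∈ g.strategic, g.linUtil a b v i

end SchellingGame

/-!
The potential `Φ`, the total utility of all agents, is a sum of symmetric contributions of ordered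
pairs of agents. When a single agent `i` relocates, only the pairs containing `i` are affected, and
each of them is counted once in the utility of `i` and once in that of her partner. Hence `Φ`
changes by exactly twice the change of the utility of `i`, and a maximizer of `Φ` admits no
profitable relocation. If all agents are strategic, `Φ` is the social welfare.
-/

theorem sum_sum_eq_two_nsmul_add_sum_compl {ι M : Type*} [Fintype ι] [DecidableEq ι]
    [AddCommMonoid M] {w : ι → ι → M} {i : ι} (hsymm : ∀ j, w j i = w i j) (hdiag : w i i = 0) :
    ∑ j, ∑ k, w j k = 2 • ∑ k, w i k + ∑ j ∈ {i}ᶜ, ∑ k ∈ {i}ᶜ, w j k := by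
  have hrow : ∑ k, w i k = ∑ k ∈ {i}ᶜ, w i k := by
    rw [Fintype.sum_eq_add_sum_compl i, hdiag, zero_add]
  calc ∑ j, ∑ k, w j k
      = ∑ k, w i k + ∑ j ∈ {i}ᶜ, (w i j + ∑ k ∈ {i}ᶜ, w j k) := by
        rw [Fintype.sum_eq_add_sum_compl i]
        simp only [Fintype.sum_eq_add_sum_compl i (w _), hsymm]
    _ = 2 • ∑ k, w i k + ∑ j ∈ {i}ᶜ, ∑ k ∈ {i}ᶜ, w j k := by
        rw [Finset.sum_add_distrib, ← hrow, ← add_assoc, two_nsmul]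

theorem exists_injective_eqOn_of_card_le {α β : Type*} [Fintype α] [Fintype β]
    (hcard : Fintype.card α ≤ Fintype.card β) {s : Set α} {f : α → β} (hf : Set.InjOn f s) :
    ∃ g : α → β, Function.Injective g ∧ Set.EqOn g f s := by
  classical
  have himage : (s.toFinset.image f).card ≤ Fintype.card α :=
    Finset.card_image_le.trans (Finset.card_le_univ _)
  obtain ⟨t, hft, -, ht⟩ :=
    Finset.exists_subsuperset_card_eq (Finset.subset_univ _) himage hcard
  have hmaps : Set.MapsTo f s t := fun x hx ↦
    hft (Finset.mem_image_of_mem f (Set.mem_toFinset.mpr hx))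
  obtain ⟨e, he⟩ := hmaps.exists_equiv_extend_of_card_eq ht.symm hf
  exact ⟨fun x ↦ e x, Subtype.val_injective.comp e.injective, he⟩

theorem injective_update_of_forall_ne {α β : Type*} [DecidableEq α] {f : α → β}
    (hf : Function.Injective f) {i : α} {z : β} (hz : ∀ j ≠ i, f j ≠ z) :
    Function.Injective (Function.update f i z) := by
  intro x y hxy
  by_cases hx : x = i <;> by_cases hy : y = i
  · rw [hx, hy]
  · subst hx
    rw [Function.update_self, Function.update_of_ne hy] at hxy
    exact absurd hxy.symm (hz y hy)
  · subst hy
    rw [Function.update_self, Function.update_of_ne hx] at hxy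
    exact absurd hxy (hz x hx)
  · rw [Function.update_of_ne hx, Function.update_of_ne hy] at hxy
    exact hf hxy

namespace SchellingGame

section Assignments

variable {A V : Type} {g : SchellingGame A V}

theorem IsAssignment.update [DecidableEq A] {v : A → V} (hv : g.IsAssignment v) {i : A}
    (hi : i ∈ g.strategic) {z : V} (hz : ∀ j ≠ i, v j ≠ z) :
    g.IsAssignment (Function.update v i z) := by
  refine ⟨injective_update_of_forall_ne hv.1 hz, fun j hj ↦ ?_⟩
  rw [Function.update_of_ne (ne_of_mem_of_not_mem hi hj).symm, hv.2 j hj]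

theorem WellFormed.exists_isAssignment [Fintype A] [DecidableEq A] [Fintype V]
    (hwf : g.WellFormed) : ∃ v, g.IsAssignment v := by
  obtain ⟨-, hcard, hloc⟩ := hwf
  obtain ⟨v, hv, hvloc⟩ := exists_injective_eqOn_of_card_le hcard.le hloc
  exact ⟨v, hv, fun i hi ↦ hvloc (Finset.mem_coe.mpr (Finset.mem_compl.mpr hi))⟩

end Assignments

section Potential

variable {A V : Type} (g : SchellingGame A V) (a b : ℝ)

open Classical in
/-- The contribution of agent `j` to the linear utility of agent `i` under `v`: `a` for an adjacent
friend and `-b` for an adjacent enemy. The case `j = i` needs no special treatment because the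
topology has no loops. -/
noncomputable def contribution (v : A → V) (i j : A) : ℝ :=
  if g.top.Adj (v i) (v j) then if g.net.Adj i j then a else -b else 0

theorem contribution_comm (v : A → V) (i j : A) :
    g.contribution a b v i j = g.contribution a b v j i := by
  rw [contribution, contribution, g.top.adj_comm (v i) (v j), g.net.adj_comm i j]

theorem contribution_self (v : A → V) (i : A) : g.contribution a b v i i = 0 :=
  if_neg (g.top.irrefl)

variable {g} in
theorem contribution_congr {v w : A → V} {i j : A} (hi : w i = v i) (hj : w j = v j) :
    g.contribution a b w i j = g.contribution a b v i j := by
  rw [contribution, contribution, hi, hj]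

variable [Fintype A]

theorem linUtil_eq_sum_contribution (v : A → V) (i : A) :
    g.linUtil a b v i = ∑ j, g.contribution a b v i j := by
  classical
  simp only [linUtil, fcount, ecount, Nat.subtype_card _ fun _ ↦ Finset.mem_filter_univ _,
    Finset.natCast_card_filter, Finset.mul_sum, ← Finset.sum_sub_distrib]
  refine Finset.sum_congr rfl fun j _ ↦ ?_
  obtain rfl | hij := eq_or_ne j i
  · simp [contribution]
  · by_cases htop : g.top.Adj (v i) (v j) <;> by_cases hnet : g.net.Adj i j <;>
      simp [contribution, htop, hnet, hij]

variable {g} in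
theorem linPotential_sub_linPotential {v w : A → V} {i : A} (h : ∀ j ≠ i, w j = v j) :
    g.linPotential a b w - g.linPotential a b v =
      2 * (g.linUtil a b w i - g.linUtil a b v i) := by
  classical
  have hdecomp (u : A → V) : g.linPotential a b u =
      2 * g.linUtil a b u i + ∑ j ∈ {i}ᶜ, ∑ k ∈ {i}ᶜ, g.contribution a b u j k := by
    simp only [linPotential, linUtil_eq_sum_contribution]
    rw [sum_sum_eq_two_nsmul_add_sum_compl (g.contribution_comm a b u · i)
      (g.contribution_self a b u i), nsmul_eq_mul, Nat.cast_ofNat]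
  have hrest : ∑ j ∈ {i}ᶜ, ∑ k ∈ {i}ᶜ, g.contribution a b w j k =
      ∑ j ∈ {i}ᶜ, ∑ k ∈ {i}ᶜ, g.contribution a b v j k := by
    refine Finset.sum_congr rfl fun j hj ↦ Finset.sum_congr rfl fun k hk ↦ ?_
    rw [Finset.mem_compl, Finset.mem_singleton] at hj hk
    exact contribution_congr a b (h j hj) (h k hk)
  rw [hdecomp w, hdecomp v, hrest]
  ring

theorem linSW_eq_linPotential (hstrat : g.strategic = Finset.univ) (v : A → V) :
    g.linSW a b v = g.linPotential a b v := by
  rw [linSW, linPotential, hstrat]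

variable {g a b} in
theorem IsAssignment.linIsEquilibrium_of_forall_linPotential_le [DecidableEq A] {v : A → V}
    (hv : g.IsAssignment v)
    (hmax : ∀ w, g.IsAssignment w → g.linPotential a b w ≤ g.linPotential a b v) :
    g.LinIsEquilibrium a b v := by
  refine ⟨hv, fun i hi z hz ↦ ?_⟩
  have hle := hmax _ (hv.update hi fun j _ ↦ hz j)
  have hsub : g.linPotential a b (Function.update v i z) - g.linPotential a b v =
      2 * (g.linUtil a b (Function.update v i z) i - g.linUtil a b v i) :=
    linPotential_sub_linPotential a b fun j hj ↦ Function.update_of_ne hj z v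
  linarith

end Potential

end SchellingGame

theorem stmt19_general {A V : Type} [Fintype A] [DecidableEq A] [Fintype V]
    (g : SchellingGame A V) (hwf : g.WellFormed) (a b : ℝ) :
    (∀ v, g.IsAssignment v →
      (∀ w, g.IsAssignment w → g.linPotential a b w ≤ g.linPotential a b v) →
      g.LinIsEquilibrium a b v) ∧
    (∃ v, g.LinIsEquilibrium a b v ∧
      ∀ w, g.IsAssignment w → g.linPotential a b w ≤ g.linPotential a b v) := by
  refine ⟨fun v hv hmax ↦ hv.linIsEquilibrium_of_forall_linPotential_le hmax, ?_⟩
  obtain ⟨v, hv, hmax⟩ := Set.exists_max_image {v | g.IsAssignment v} (g.linPotential a b)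
    (Set.toFinite _) hwf.exists_isAssignment
  exact ⟨v, hv.linIsEquilibrium_of_forall_linPotential_le hmax, hmax⟩

/-- in the linear-utility variant with all agents strategic, every
assignment maximizing the social welfare is an equilibrium; consequently the price of
stability is 1 (there is an equilibrium with maximum social welfare). -/
theorem stmt19 (A V : Type) [Fintype A] [DecidableEq A] [Fintype V] [DecidableEq V]
    (g : SchellingGame A V) (hwf : g.WellFormed) (hstrat : g.strategic = Finset.univ)
    (a b : ℝ) (ha : 0 ≤ a) (hb : 0 ≤ b) :
    (∀ v, g.IsAssignment v → (∀ w, g.IsAssignment w → g.linSW a b w ≤ g.linSW a b v) →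
      g.LinIsEquilibrium a b v) ∧
    (∃ v, g.LinIsEquilibrium a b v ∧ ∀ w, g.IsAssignment w → g.linSW a b w ≤ g.linSW a b v) := by
  simpa only [g.linSW_eq_linPotential a b hstrat] using stmt19_general g hwf a b
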